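/- arXiv:2408.11404 — 2 statements merged into one kernel-verified Lean document; each statement's English description precedes it below -/
import Mathlib

section
/- Let $l \ge 1$ and $k \ge 0$ be integers, let $e_1 < e_2 < \dots < e_l$ be integers, let $m_1, \dots, m_l$ be positive integers, and set $n = \sum_{j=1}^l m_j$. Assume $e_l - e_1 \le k+1$. Then the following identity of integers holds: $\sum_{j=1}^{l}(k+1)m_j^2 + \sum_{1\le i<j\le l}\big(\max(0,\,k+e_i-e_j+1)+\max(0,\,k+e_j-e_i+1)\big)m_im_j + 1 - \sum_{1\le i\le j\le l}(e_j-e_i+1)m_im_j - \big(k\tbinom{n+1}{2}+n\big) = \big(k\tbinom{n}{2}-n+1\big) - \sum_{1\le i<j\le l}(e_j-e_i-1)m_im_j$. -/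
open Finset

theorem aux_sq (f : ℕ → ℤ) (l : ℕ) :
    (∑ j ∈ Icc 1 l, f j) ^ 2
      = (∑ j ∈ Icc 1 l, f j ^ 2) + 2 * ∑ i ∈ Icc 1 l, ∑ j ∈ Icc (i + 1) l, f i * f j := by
  induction l with
  | zero => simp
  | succ l ih =>
    have h1 : 1 ≤ l + 1 := by omega
    rw [Finset.sum_Icc_succ_top h1, Finset.sum_Icc_succ_top h1, Finset.sum_Icc_succ_top h1]
    have h2 : ∑ i ∈ Icc 1 l, ∑ j ∈ Icc (i + 1) (l + 1), f i * f j
        = (∑ i ∈ Icc 1 l, ∑ j ∈ Icc (i + 1) l, f i * f j) + (∑ i ∈ Icc 1 l, f i) * f (l + 1) := by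
      rw [Finset.sum_mul, ← Finset.sum_add_distrib]
      refine Finset.sum_congr rfl fun i hi => ?_
      rw [Finset.mem_Icc] at hi
      rw [Finset.sum_Icc_succ_top (by omega)]
    have h3 : Icc (l + 1 + 1) (l + 1) = (∅ : Finset ℕ) := Finset.Icc_eq_empty (by omega)
    rw [h2, h3, Finset.sum_empty]
    linear_combination ih

theorem aux_split (g : ℕ → ℤ) (i l : ℕ) (h : i ≤ l) :
    ∑ j ∈ Icc i l, g j = g i + ∑ j ∈ Icc (i + 1) l, g j := by
  have : Icc i l = insert i (Icc (i + 1) l) := by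
    ext x
    simp only [Finset.mem_insert, Finset.mem_Icc]
    omega
  rw [this, Finset.sum_insert (by simp)]

theorem splitting_type_dimension_identity
    (l : ℕ) (hl : 1 ≤ l) (k : ℤ) (hk : 0 ≤ k)
    (e : ℕ → ℤ) (he : ∀ i j, 1 ≤ i → i < j → j ≤ l → e i < e j)
    (m : ℕ → ℕ) (hm : ∀ j ∈ Icc 1 l, 1 ≤ m j)
    (n : ℕ) (hn : n = ∑ j ∈ Icc 1 l, m j)
    (hel : e l - e 1 ≤ k + 1) :
    (∑ j ∈ Icc 1 l, (k + 1) * (m j : ℤ) ^ 2)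
      + (∑ i ∈ Icc 1 l, ∑ j ∈ Icc (i + 1) l,
          (max 0 (k + e i - e j + 1) + max 0 (k + e j - e i + 1)) * (m i : ℤ) * (m j : ℤ))
      + 1
      - (∑ i ∈ Icc 1 l, ∑ j ∈ Icc i l, (e j - e i + 1) * (m i : ℤ) * (m j : ℤ))
      - (k * ((n + 1).choose 2 : ℤ) + (n : ℤ))
    = (k * (n.choose 2 : ℤ) - (n : ℤ) + 1)
      - ∑ i ∈ Icc 1 l, ∑ j ∈ Icc (i + 1) l, (e j - e i - 1) * (m i : ℤ) * (m j : ℤ) := by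
  have hmono : ∀ i j, 1 ≤ i → i ≤ j → j ≤ l → e i ≤ e j := by
    intro i j h1 h2 h3
    rcases Nat.lt_or_eq_of_le h2 with h | h
    · exact (he i j h1 h h3).le
    · rw [h]
  have hA : ∑ i ∈ Icc 1 l, ∑ j ∈ Icc (i + 1) l,
          (max 0 (k + e i - e j + 1) + max 0 (k + e j - e i + 1)) * (m i : ℤ) * (m j : ℤ)
      = ∑ i ∈ Icc 1 l, ∑ j ∈ Icc (i + 1) l, (2 * k + 2) * ((m i : ℤ) * (m j : ℤ)) := by
    refine Finset.sum_congr rfl fun i hi => Finset.sum_congr rfl fun j hj => ?_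
    rw [Finset.mem_Icc] at hi hj
    have h1 := hmono 1 i le_rfl hi.1 hi.2
    have h2 := hmono j l (by omega) hj.2 le_rfl
    have h3 := hmono i j hi.1 (by omega) hj.2
    rw [max_eq_right (by linarith), max_eq_right (by linarith)]
    ring
  have hB : ∑ i ∈ Icc 1 l, ∑ j ∈ Icc i l, (e j - e i + 1) * (m i : ℤ) * (m j : ℤ)
      = (∑ i ∈ Icc 1 l, (m i : ℤ) ^ 2)
        + ((∑ i ∈ Icc 1 l, ∑ j ∈ Icc (i + 1) l, (e j - e i - 1) * (m i : ℤ) * (m j : ℤ))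
        + ∑ i ∈ Icc 1 l, ∑ j ∈ Icc (i + 1) l, 2 * ((m i : ℤ) * (m j : ℤ))) := by
    rw [← Finset.sum_add_distrib, ← Finset.sum_add_distrib]
    refine Finset.sum_congr rfl fun i hi => ?_
    rw [Finset.mem_Icc] at hi
    rw [aux_split _ i l hi.2, ← Finset.sum_add_distrib]
    congr 1
    · ring
    · exact Finset.sum_congr rfl fun j _ => by ring
  have hsq := aux_sq (fun j => (m j : ℤ)) l
  have hnz : (n : ℤ) = ∑ j ∈ Icc 1 l, (m j : ℤ) := by rw [hn]; push_cast; rfl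
  simp only [← hnz] at hsq
  have hc : ((n + 1).choose 2 : ℤ) + (n.choose 2 : ℤ) = (n : ℤ) ^ 2 := by
    clear hn hnz hsq
    induction n with
    | zero => simp
    | succ n ih =>
      have a : (n + 1 + 1).choose 2 = (n + 1) + (n + 1).choose 2 := by
        rw [Nat.choose_succ_succ' (n + 1) 1, Nat.choose_one_right]
      have b : (n + 1).choose 2 = n + n.choose 2 := by
        rw [Nat.choose_succ_succ' n 1, Nat.choose_one_right]
      rw [a]
      have b' : ((n + 1).choose 2 : ℤ) = n + (n.choose 2 : ℤ) := by exact_mod_cast b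
      push_cast
      linear_combination ih + b'
  rw [hA, hB]
  simp only [← Finset.mul_sum] at hsq ⊢
  linear_combination (-k) * hsq - k * hc
end

section
/- Let $r \ge 2$ be an integer, let $s$ be an integer with $0 \le s \le r-1$, and let $g$ be a real number with $g > \frac{r(r+1)(r+4)}{r-1}$. Then $\frac{sg}{s+1} + \frac{(r-s-1)g}{r-s} + g - 2 + r > 2\Big(\frac{rg}{r+1} + r + 1\Big)$. -/
theorem gonality_sequence_key_inequality
    (r s : ℤ) (hr : 2 ≤ r) (hs0 : 0 ≤ s) (hs1 : s ≤ r - 1)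
    (g : ℝ) (hg : (r : ℝ) * ((r : ℝ) + 1) * ((r : ℝ) + 4) / ((r : ℝ) - 1) < g) :
    2 * ((r : ℝ) * g / ((r : ℝ) + 1) + (r : ℝ) + 1)
      < (s : ℝ) * g / ((s : ℝ) + 1) + ((r : ℝ) - (s : ℝ) - 1) * g / ((r : ℝ) - (s : ℝ))
          + g - 2 + (r : ℝ) := by
  have hr' : (2 : ℝ) ≤ r := by exact_mod_cast hr
  have hs0' : (0 : ℝ) ≤ s := by exact_mod_cast hs0
  have hs1' : (s : ℝ) ≤ r - 1 := by exact_mod_cast hs1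
  generalize (r : ℝ) = x at *
  generalize (s : ℝ) = y at *
  have h1 : 0 < x - 1 := by linarith
  have h2 : 0 < x + 1 := by linarith
  have h3 : 0 < y + 1 := by linarith
  have h4 : 0 < x - y := by linarith
  have h5 : 0 < x := by linarith
  have hg0 : 0 < g := lt_trans (by positivity) hg
  rw [div_lt_iff₀ h1] at hg
  have e1 : y * g / (y + 1) + (x - y - 1) * g / (x - y)
      = 2 * g - g * ((x + 1) / ((y + 1) * (x - y))) := by
    field_simp
    ring
  have e2 : x * g / (x + 1) = g - g / (x + 1) := by
    field_simp
    ring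
  have k1 : (x + 1) / ((y + 1) * (x - y)) ≤ (x + 1) / x := by
    apply div_le_div_of_nonneg_left h2.le h5
    nlinarith [mul_nonneg hs0' (sub_nonneg.2 hs1')]
  have k2 := mul_le_mul_of_nonneg_left k1 hg0.le
  have k3 : x + 4 < g * (x - 1) / (x * (x + 1)) := by
    rw [lt_div_iff₀ (by positivity)]
    linarith
  have e3 : g * (x - 1) / (x * (x + 1)) = g + 2 * (g / (x + 1)) - g * ((x + 1) / x) := by
    field_simp
    ring
  rw [e1, e2]
  linarith
end
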